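/- Let G be a finite group. The triple (S_G(ω;ω), ≤, r) is a topological Ramsey space. -/

import Mathlib

open Topology

section Ellentuck

variable {R α : Type*}

/-- The basic set `[a,A] = {B ∈ R : B ≤ A and r_n(B) = a for some n}` of the
Ellentuck topology determined by a quasi-order `le` and approximation
mappings `r`. -/
def EllSet (le : R → R → Prop) (r : ℕ → R → α) (a : α) (A : R) : Set R :=
  {B | le B A ∧ ∃ n, r n B = a}

/-- The Ellentuck topology on `R`, generated by the basic sets `[a,A]`. -/
def EllTop (le : R → R → Prop) (r : ℕ → R → α) : TopologicalSpace R :=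
  TopologicalSpace.generateFrom {s | ∃ a A, s = EllSet le r a A}

/-- A set `S ⊆ R` is Ramsey: for every nonempty `[a,A]` there is `B ∈ [a,A]`
with `[a,B] ⊆ S` or `[a,B] ∩ S = ∅`. -/
def IsRamseySet (le : R → R → Prop) (r : ℕ → R → α) (S : Set R) : Prop :=
  ∀ (a : α) (A : R), (EllSet le r a A).Nonempty →
    ∃ B ∈ EllSet le r a A, EllSet le r a B ⊆ S ∨ EllSet le r a B ∩ S = ∅

/-- A set `S ⊆ R` is Ramsey null: for every nonempty `[a,A]` there is
`B ∈ [a,A]` with `[a,B] ∩ S = ∅`. -/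
def IsRamseyNullSet (le : R → R → Prop) (r : ℕ → R → α) (S : Set R) : Prop :=
  ∀ (a : α) (A : R), (EllSet le r a A).Nonempty →
    ∃ B ∈ EllSet le r a A, EllSet le r a B ∩ S = ∅

/-- A set has the property of Baire with respect to a topology `t`: it is the
symmetric difference of a `t`-open set and a `t`-meager set. -/
def HasPropertyOfBaire (t : TopologicalSpace R) (S : Set R) : Prop :=
  ∃ U M : Set R, IsOpen[t] U ∧ @IsMeagre R t M ∧ S = symmDiff U M

/-- `(R, ≤, r)` is a topological Ramsey space: every subset of `R` with the
property of Baire in the Ellentuck topology is Ramsey, and every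
Ellentuck-meager subset is Ramsey null. -/
def IsTopRamseySpace (le : R → R → Prop) (r : ℕ → R → α) : Prop :=
  (∀ S : Set R, HasPropertyOfBaire (EllTop le r) S → IsRamseySet le r S) ∧
  (∀ S : Set R, @IsMeagre R (EllTop le r) S → IsRamseyNullSet le r S)

end Ellentuck

/-- The space `S_G(ω;ω)` of partial `G`-partitions of `ω` into `ω` blocks:
maps `A : ω → {ν} ∪ (ω × G)` (with `ν` encoded as `none`) such that each
block `j` first occurs with group element `e`, and the first occurrences of
the blocks are increasing. -/
def SG (G : Type) [Group G] : Set (ℕ → Option (ℕ × G)) :=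
  {A | (∀ j : ℕ, ∃ i, A i = some (j, 1) ∧ ∀ i' < i, ∀ g : G, A i' ≠ some (j, g)) ∧
       ∀ j j' : ℕ, j < j' →
         ∃ i, A i = some (j, (1 : G)) ∧ ∀ i', A i' = some (j', (1 : G)) → i < i'}

/-- The space `S_G(ω;k)` of partial `G`-partitions of `ω` into `k` blocks. -/
def SGK (G : Type) [Group G] (k : ℕ) : Set (ℕ → Option (ℕ × G)) :=
  {A | (∀ i j g, A i = some (j, g) → j < k) ∧
       (∀ j < k, ∃ i, A i = some (j, (1 : G)) ∧ ∀ i' < i, ∀ g : G, A i' ≠ some (j, g)) ∧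
       ∀ j j' : ℕ, j < j' → j' < k →
         ∃ i, A i = some (j, (1 : G)) ∧ ∀ i', A i' = some (j', (1 : G)) → i < i'}

/-- The composition `A·B` of partial `G`-partitions. -/
def compG {G : Type} [Group G] (A B : ℕ → Option (ℕ × G)) : ℕ → Option (ℕ × G) :=
  fun i => match A i with
    | none => none
    | some (j, b) => match B j with
      | none => none
      | some (k, c) => some (k, b * c)

/-- The approximation map: `r(0,A) = ∅` and, for `n > 0`, `r(n,A)` is the
restriction of `A` to the initial segment below `min A^{-1}({(n,e)})`. -/
noncomputable def rG {G : Type} [Group G] (n : ℕ) (A : ℕ → Option (ℕ × G)) :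
    List (Option (ℕ × G)) :=
  if n = 0 then [] else
    List.ofFn fun i : Fin (sInf {i | A i = some (n, (1 : G))}) => A i

/-! ### An abstract Ellentuck theorem for filtered monoids -/

section FilteredMonoid

variable {M : Type*} [Monoid M]

/-- The combinatorial axioms on a decreasing sequence of submonoids under which the sets
`a * F n` generate a topology satisfying the Ellentuck theorem. -/
structure RamseyFiltration (F : ℕ → Submonoid M) : Prop where
  antitone : Antitone F
  fusion : ∀ P : ℕ → M, (∀ n, ∃ t ∈ F n, P (n + 1) = P n * t) →
    ∃ d, ∀ n, ∃ t ∈ F n, d = P n * t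
  approx : ∃ T : ℕ → Set (M × ℕ), (∀ k, (T k).Finite) ∧
    (∀ k, ∀ p ∈ T k, ∀ d ∈ F p.2, ∃ d' ∈ F k, d' * p.1 = p.1 * d) ∧
    (∀ k, ∀ p ∈ T k, ∀ d ∈ F k, ∃ d' ∈ F p.2, d * p.1 = p.1 * d') ∧
    ∀ c n, ∃ k ≥ n, ∃ p ∈ T k, p.2 = n ∧ ∃ d ∈ F n, c = p.1 * d
  pigeonhole : ∀ (n : ℕ) (V : Set M),
    (∀ c ∈ F n, ∀ x ∈ F (n + 1), (c * x ∈ V ↔ c ∈ V)) →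
    ∃ d ∈ F n, (∀ c ∈ F n, d * c ∈ V) ∨ ∀ c ∈ F n, d * c ∉ V

/-- The basic neighbourhood `a * F n` is contained in `U`. -/
def Accepts (F : ℕ → Submonoid M) (U : Set M) (a : M) (n : ℕ) : Prop :=
  ∀ c ∈ F n, a * c ∈ U

/-- No basic neighbourhood `a * c * F n` with `c ∈ F n` is contained in `U`. -/
def Rejects (F : ℕ → Submonoid M) (U : Set M) (a : M) (n : ℕ) : Prop :=
  ∀ c ∈ F n, ¬ Accepts F U (a * c) n

variable {F : ℕ → Submonoid M}

theorem Accepts.mul {U : Set M} {a : M} {n : ℕ} (h : Accepts F U a n) {c : M} (hc : c ∈ F n) :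
    Accepts F U (a * c) n := fun d hd => by
  rw [mul_assoc]; exact h _ (mul_mem hc hd)

theorem Rejects.mul {U : Set M} {a : M} {n : ℕ} (h : Rejects F U a n) {c : M} (hc : c ∈ F n) :
    Rejects F U (a * c) n := fun d hd => by
  rw [mul_assoc]; exact h _ (mul_mem hc hd)

theorem Rejects.not_accepts {U : Set M} {a : M} {n : ℕ} (h : Rejects F U a n) :
    ¬ Accepts F U a n := by
  simpa using h 1 (one_mem _)

namespace RamseyFiltration

theorem exists_forall_of_dense (hF : RamseyFiltration F) (n₀ : ℕ) (Φ : M → ℕ → Prop)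
    (hmul : ∀ a n, Φ a n → ∀ c ∈ F n, Φ (a * c) n)
    (hdense : ∀ a n, n₀ ≤ n → ∃ c ∈ F n, Φ (a * c) n) :
    ∃ d ∈ F n₀, ∀ c n, n₀ ≤ n → Φ (d * c) n := by
  obtain ⟨T, hfin, hpush, hpull, hcov⟩ := hF.approx
  have aux : ∀ (k : ℕ) (a : M) (s : Set (M × ℕ)), s.Finite → s ⊆ T k →
      ∃ c ∈ F k, ∀ p ∈ s, n₀ ≤ p.2 → Φ (a * c * p.1) p.2 := by
    intro k a s hs
    induction s, hs using Set.Finite.induction_on with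
    | empty => intro _; exact ⟨1, one_mem _, by simp⟩
    | @insert p s _ _ ih =>
      intro hsub
      obtain ⟨c, hc, hcs⟩ := ih ((Set.subset_insert _ _).trans hsub)
      have hp : p ∈ T k := hsub (Set.mem_insert _ _)
      by_cases hn : n₀ ≤ p.2
      · obtain ⟨e, he, hΦ⟩ := hdense (a * c * p.1) p.2 hn
        obtain ⟨d, hd, hde⟩ := hpush k p hp e he
        refine ⟨c * d, mul_mem hc hd, ?_⟩
        rintro q (rfl | hq) hqn
        · rw [mul_assoc, mul_assoc, hde]
          simpa only [mul_assoc] using hΦ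
        · obtain ⟨d', hd', h⟩ := hpull k q (hsub (Set.mem_insert_of_mem _ hq)) d hd
          have := hmul _ _ (hcs q hq hqn) d' hd'
          rw [mul_assoc, mul_assoc, h]
          simpa only [mul_assoc] using this
      · refine ⟨c, hc, ?_⟩
        rintro q (rfl | hq) hqn
        · exact absurd hqn hn
        · exact hcs q hq hqn
  have step : ∀ (k : ℕ) (a : M), ∃ c, c ∈ F k ∧ c ∈ F n₀ ∧
      (n₀ ≤ k → ∀ p ∈ T k, n₀ ≤ p.2 → Φ (a * c * p.1) p.2) := by
    intro k a
    by_cases hk : n₀ ≤ k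
    · obtain ⟨c, hc, h⟩ := aux k a (T k) (hfin k) subset_rfl
      exact ⟨c, hc, hF.antitone hk hc, fun _ => h⟩
    · exact ⟨1, one_mem _, one_mem _, fun h => absurd h hk⟩
  choose s hsk hsn hs using step
  let P : ℕ → M := fun n => Nat.rec 1 (fun k a => a * s k a) n
  have hP : ∀ k, P (k + 1) = P k * s k (P k) := fun _ => rfl
  have hPn : ∀ k, P k ∈ F n₀ := by
    intro k
    induction k with
    | zero => exact one_mem _
    | succ k ih => rw [hP]; exact mul_mem ih (hsn _ _)
  obtain ⟨d, hd⟩ := hF.fusion P fun n => ⟨_, hsk n _, hP n⟩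
  refine ⟨d, ?_, ?_⟩
  · obtain ⟨t, ht, rfl⟩ := hd n₀
    exact mul_mem (hPn _) ht
  · intro c n hn
    obtain ⟨k, hk, p, hp, rfl, e, he, rfl⟩ := hcov c n
    obtain ⟨t, ht, rfl⟩ := hd (k + 1)
    obtain ⟨t', ht', htp⟩ := hpull k p hp t (hF.antitone k.le_succ ht)
    have := hmul _ _ (hs k (P k) (hn.trans hk) p hp hn) (t' * e) (mul_mem ht' he)
    have heq : P (k + 1) * t * (p.1 * e) = P k * s k (P k) * p.1 * (t' * e) := by
      rw [hP]
      calc P k * s k (P k) * t * (p.1 * e) = P k * s k (P k) * (t * p.1) * e := by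
            simp only [mul_assoc]
        _ = _ := by rw [htp]; simp only [mul_assoc]
    rwa [heq]

theorem exists_forall_mem_or_notMem (hF : RamseyFiltration F) {U : Set M}
    (hU : ∀ a ∈ U, ∃ n, Accepts F U a n) (n₀ : ℕ) :
    ∃ d ∈ F n₀, (∀ c ∈ F n₀, d * c ∈ U) ∨ ∀ c ∈ F n₀, d * c ∉ U := by
  obtain ⟨d₁, hd₁, h₁⟩ := hF.exists_forall_of_dense n₀
    (fun a n => Accepts F U a n ∨ Rejects F U a n)
    (fun a n h c hc => h.imp (·.mul hc) (·.mul hc))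
    (fun a n _ => by
      by_cases h : ∃ c ∈ F n, Accepts F U (a * c) n
      · obtain ⟨c, hc, h⟩ := h
        exact ⟨c, hc, Or.inl h⟩
      · push Not at h
        exact ⟨1, one_mem _, Or.inr (by simpa [Rejects] using h)⟩)
  have hrej : ∀ a n, n₀ ≤ n → ¬ Accepts F U (d₁ * a) n → Rejects F U (d₁ * a) n :=
    fun a n hn h => (h₁ a n hn).resolve_left h
  obtain ⟨d₂, hd₂, h₂⟩ := hF.exists_forall_of_dense n₀
    (fun a n => Accepts F U (d₁ * a) n ∨ ∀ y ∈ F n, Rejects F U (d₁ * (a * y)) (n + 1))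
    (fun a n h c hc => h.imp (fun h => by rw [← mul_assoc]; exact h.mul hc)
      (fun h y hy => by rw [mul_assoc a]; exact h _ (mul_mem hc hy)))
    (fun a n hn => by
      obtain ⟨d, hd, h⟩ := hF.pigeonhole n {y | Accepts F U (d₁ * (a * y)) (n + 1)} (by
        intro c hc x hx
        simp only [Set.mem_ofPred_eq]
        constructor
        · intro h
          by_contra hcon
          have := hrej _ _ (by omega) hcon x hx
          apply this
          simpa only [mul_assoc] using h
        · intro h
          simpa only [mul_assoc] using h.mul hx)
      refine ⟨d, hd, h.imp ?_ ?_⟩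
      · intro h c hc
        have := h c hc 1 (one_mem _)
        simpa only [mul_assoc, mul_one] using this
      · intro h y hy
        rw [mul_assoc a]
        exact hrej _ _ (by omega) (h y hy))
  refine ⟨d₁ * d₂, mul_mem hd₁ hd₂, ?_⟩
  by_cases hacc : Accepts F U (d₁ * d₂) n₀
  · exact Or.inl hacc
  · right
    have key : ∀ n, n₀ ≤ n → ∀ c ∈ F n₀, Rejects F U (d₁ * (d₂ * c)) n := by
      intro n hn
      induction n, hn using Nat.le_induction with
      | base =>
        intro c hc
        rw [← mul_assoc]
        exact (hrej _ _ le_rfl hacc).mul hc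
      | succ n hn ih =>
        intro c hc
        have := (h₂ c n hn).resolve_left (ih c hc).not_accepts 1 (one_mem _)
        simpa using this
    intro c hc hcU
    obtain ⟨n, hn⟩ := hU _ hcU
    apply (key (max n n₀) (le_max_right _ _) c hc).not_accepts
    intro x hx
    rw [← mul_assoc d₁]
    exact hn x (hF.antitone (le_max_left _ _) hx)

theorem exists_forall_mem_or_notMem_mul (hF : RamseyFiltration F) {U : Set M}
    (hU : ∀ a ∈ U, ∃ n, Accepts F U a n) (a : M) (n : ℕ) :
    ∃ d ∈ F n, (∀ c ∈ F n, a * d * c ∈ U) ∨ ∀ c ∈ F n, a * d * c ∉ U := by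
  have := hF.exists_forall_mem_or_notMem (U := {c | a * c ∈ U}) (fun c hc => by
    obtain ⟨m, hm⟩ := hU _ hc
    exact ⟨m, fun x hx => by simpa [mul_assoc] using hm x hx⟩) n
  simpa only [Set.mem_ofPred_eq, ← mul_assoc] using this

variable [TopologicalSpace M]

theorem exists_forall_mem_of_dense (hF : RamseyFiltration F)
    (ht : ∀ U : Set M, IsOpen U ↔ ∀ a ∈ U, ∃ n, Accepts F U a n) {U : Set M}
    (hU : IsOpen U) (hd : Dense U) (a : M) (n : ℕ) :
    ∃ d ∈ F n, ∀ c ∈ F n, a * d * c ∈ U := by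
  obtain ⟨d, hdn, h | h⟩ := hF.exists_forall_mem_or_notMem_mul ((ht U).1 hU) a n
  · exact ⟨d, hdn, h⟩
  · exfalso
    have hopen : IsOpen {x | ∃ c ∈ F n, x = a * d * c} := by
      rw [ht]
      rintro _ ⟨c, hc, rfl⟩
      exact ⟨n, fun x hx => ⟨c * x, mul_mem hc hx, by simp only [mul_assoc]⟩⟩
    obtain ⟨_, ⟨c, hc, rfl⟩, hxU⟩ := hd.inter_open_nonempty _ hopen ⟨_, 1, one_mem _, rfl⟩
    exact h c hc hxU

theorem exists_forall_notMem_of_isMeagre (hF : RamseyFiltration F)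
    (ht : ∀ U : Set M, IsOpen U ↔ ∀ a ∈ U, ∃ n, Accepts F U a n) {S : Set M}
    (hS : IsMeagre S) (a : M) (n : ℕ) :
    ∃ d ∈ F n, ∀ c ∈ F n, a * d * c ∉ S := by
  obtain ⟨𝒰, hopen, hdense, hcount, hsub⟩ := mem_residual_iff.1 hS
  obtain ⟨u, hu⟩ := (hcount.insert Set.univ).exists_eq_range (Set.insert_nonempty _ _)
  have huo : ∀ i, IsOpen (u i) ∧ Dense (u i) := by
    intro i
    have : u i ∈ insert Set.univ 𝒰 := hu ▸ Set.mem_range_self i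
    rcases this with h | h
    · rw [h]; exact ⟨isOpen_univ, dense_univ⟩
    · exact ⟨hopen _ h, hdense _ h⟩
  obtain ⟨d, hd, h⟩ := hF.exists_forall_of_dense n
    (fun b m => ∀ i ≤ m, ∀ c ∈ F m, a * b * c ∈ u i)
    (fun b m h c hc i hi x hx => by
      have := h i hi (c * x) (mul_mem hc hx)
      simpa only [mul_assoc] using this)
    (fun b m _ => by
      suffices ∀ l, ∃ c ∈ F m, ∀ i < l, ∀ x ∈ F m, a * (b * c) * x ∈ u i by
        obtain ⟨c, hc, h⟩ := this (m + 1)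
        exact ⟨c, hc, fun i hi => h i (by omega)⟩
      intro l
      induction l with
      | zero => exact ⟨1, one_mem _, by simp⟩
      | succ l ih =>
        obtain ⟨c, hc, h⟩ := ih
        obtain ⟨e, he, h'⟩ :=
          hF.exists_forall_mem_of_dense ht (huo l).1 (huo l).2 (a * (b * c)) m
        refine ⟨c * e, mul_mem hc he, fun i hi x hx => ?_⟩
        rcases Nat.lt_succ_iff_lt_or_eq.1 hi with hi | rfl
        · have := h i hi (e * x) (mul_mem he hx)
          simpa only [mul_assoc] using this
        · have := h' x hx
          simpa only [mul_assoc] using this)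
  refine ⟨d, hd, fun c _ hcS => hsub ?_ hcS⟩
  intro V hV
  obtain ⟨i, rfl⟩ : V ∈ Set.range u := hu ▸ Set.mem_insert_of_mem _ hV
  have := h c (max i n) (le_max_right _ _) i (le_max_left _ _) 1 (one_mem _)
  simpa only [mul_assoc, mul_one] using this

theorem exists_forall_mem_or_notMem_of_baire (hF : RamseyFiltration F)
    (ht : ∀ U : Set M, IsOpen U ↔ ∀ a ∈ U, ∃ n, Accepts F U a n) {U N : Set M}
    (hU : IsOpen U) (hN : IsMeagre N) (a : M) (n : ℕ) :
    ∃ d ∈ F n, (∀ c ∈ F n, a * d * c ∈ symmDiff U N) ∨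
      ∀ c ∈ F n, a * d * c ∉ symmDiff U N := by
  obtain ⟨d, hd, hdN⟩ := hF.exists_forall_notMem_of_isMeagre ht hN a n
  obtain ⟨e, he, h⟩ := hF.exists_forall_mem_or_notMem_mul ((ht U).1 hU) (a * d) n
  have hN' : ∀ c ∈ F n, a * (d * e) * c ∉ N := fun c hc => by
    simpa only [mul_assoc] using hdN (e * c) (mul_mem he hc)
  refine ⟨d * e, mul_mem hd he, h.imp ?_ ?_⟩
  · intro h c hc
    exact Or.inl ⟨by simpa only [mul_assoc] using h c hc, hN' c hc⟩
  · rintro h c hc (⟨h', -⟩ | ⟨h', -⟩)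
    · exact h c hc (by simpa only [mul_assoc] using h')
    · exact hN' c hc h'

end RamseyFiltration

end FilteredMonoid

/-! ### The Carlson–Simpson theorem -/

section CarlsonSimpson

attribute [local instance] Ultrafilter.semigroup

theorem Ultrafilter.map_mul_hom {S T : Type*} [Monoid S] [Monoid T] (f : S →* T)
    (U V : Ultrafilter S) : (U * V).map f = U.map f * V.map f := by
  ext s
  change (∀ᶠ x in ((U * V : Ultrafilter S) : Filter S), f x ∈ s) ↔
    ∀ᶠ x in ((U.map f * V.map f : Ultrafilter T) : Filter T), x ∈ s
  simp only [Ultrafilter.eventually_mul, Ultrafilter.coe_map, Filter.eventually_map, map_mul]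

/-- An element generating a minimal left ideal of a compact right topological semigroup. -/
theorem exists_forall_exists_mul_eq {S : Type*} [Semigroup S] [TopologicalSpace S] [CompactSpace S]
    [T2Space S] [Nonempty S] (hcont : ∀ r : S, Continuous (· * r)) :
    ∃ w : S, ∀ a : S, ∃ b : S, b * (a * w) = w := by
  let 𝒞 : Set (Set S) := {N | IsClosed N ∧ N.Nonempty ∧ ∀ a, ∀ x ∈ N, a * x ∈ N}
  obtain ⟨N, -, hN⟩ := zorn_superset_nonempty 𝒞 (by
    intro c hc hchain hne
    refine ⟨⋂₀ c, ⟨isClosed_sInter fun s hs => (hc hs).1, ?_, ?_⟩,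
      fun s hs => Set.sInter_subset_of_mem hs⟩
    · have := hne.to_subtype
      exact IsCompact.nonempty_sInter_of_directed_nonempty_isCompact_isClosed
        (fun a ha b hb => (hchain.total ha hb).elim (fun h => ⟨a, ha, subset_rfl, h⟩)
          fun h => ⟨b, hb, h, subset_rfl⟩) (fun s hs => (hc hs).2.1)
        (fun s hs => (hc hs).1.isCompact) (fun s hs => (hc hs).1)
    · intro a x hx s hs
      exact (hc hs).2.2 a x (hx s hs)) Set.univ
    ⟨isClosed_univ, Set.univ_nonempty, fun _ _ _ => trivial⟩
  obtain ⟨w, hw⟩ := hN.prop.2.1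
  refine ⟨w, fun a => ?_⟩
  have haw := hN.prop.2.2 a w hw
  have hmem : Set.range (· * (a * w)) ∈ 𝒞 := by
    refine ⟨(isCompact_range (hcont _)).isClosed, Set.range_nonempty _, ?_⟩
    rintro b _ ⟨x, rfl⟩
    exact ⟨b * x, mul_assoc _ _ _⟩
  have hle : Set.range (· * (a * w)) ⊆ N := by
    rintro _ ⟨x, rfl⟩
    exact hN.prop.2.2 x _ haw
  exact hN.le_of_le hmem hle hw

variable {L : Type*}

/-- Substitution of the letter `l` for the variable `none`. -/
def substVar (l : L) : FreeMonoid (Option L) →* FreeMonoid L :=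
  FreeMonoid.map fun o => o.getD l

/-- The word obtained from `w` by appending the first `m` of the variable words `y`, with
the letters `l` substituted for the variables. -/
def substWord (w : FreeMonoid L) (y : ℕ → FreeMonoid (Option L)) (l : ℕ → L) : ℕ → FreeMonoid L
  | 0 => w
  | m + 1 => substWord w y l m * substVar (l m) (y m)

/-- An ultrafilter on left variable words absorbing all its substitutions on the right. -/
theorem exists_ultrafilter_mul_map_substVar [Nonempty L] :
    ∃ q : Ultrafilter (FreeMonoid (Option L)),
      {y | ∃ t, y = FreeMonoid.of none * t} ∈ q ∧
      ∀ l : L, q * (q.map (substVar l)).map (FreeMonoid.map some) = q := by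
  obtain ⟨w, hw⟩ := exists_forall_exists_mul_eq (S := Ultrafilter (FreeMonoid L))
    Ultrafilter.continuous_mul_left
  let ι : FreeMonoid L →* FreeMonoid (Option L) := FreeMonoid.map some
  have hι : ∀ (l : L) (p : Ultrafilter (FreeMonoid L)), (p.map ι).map (substVar l) = p := by
    intro l p
    rw [Ultrafilter.map_map]
    convert Ultrafilter.map_id p
    ext x
    simp [ι, substVar, FreeMonoid.map_map]
  let LV : Set (FreeMonoid (Option L)) := {y | ∃ t, y = FreeMonoid.of none * t}
  have hLV : ∀ p r : Ultrafilter (FreeMonoid (Option L)), LV ∈ p → LV ∈ p * r := by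
    intro p r hp
    change ∀ᶠ x in ((p * r : Ultrafilter _) : Filter _), x ∈ LV
    rw [Ultrafilter.eventually_mul]
    filter_upwards [hp] with x hx
    obtain ⟨t, rfl⟩ := hx
    exact Filter.Eventually.of_forall fun z => ⟨t * z, mul_assoc _ _ _⟩
  let K : Set (Ultrafilter (FreeMonoid (Option L))) := (· * w.map ι) '' {p | LV ∈ p}
  have hKc : IsCompact K :=
    (ultrafilter_isClosed_basic LV).isCompact.image (Ultrafilter.continuous_mul_left _)
  have hKn : K.Nonempty :=
    ⟨_, pure (FreeMonoid.of none), ⟨1, (mul_one _).symm⟩, rfl⟩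
  obtain ⟨q, ⟨p, hp, hpq⟩, hq⟩ := exists_idempotent_in_compact_subsemigroup
    Ultrafilter.continuous_mul_left K hKn hKc (by
      rintro _ ⟨p, hp, rfl⟩ _ ⟨p', hp', rfl⟩
      exact ⟨p * w.map ι * p', hLV _ _ (hLV _ _ hp), mul_assoc _ _ _⟩)
  refine ⟨q, hpq ▸ hLV _ _ hp, fun l => ?_⟩
  have h1 : q.map (substVar l) = p.map (substVar l) * w := by
    rw [← hpq]
    change (p * w.map ι).map (substVar l) = _
    rw [Ultrafilter.map_mul_hom, hι]
  have hidem : q.map (substVar l) * q.map (substVar l) = q.map (substVar l) := by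
    rw [← Ultrafilter.map_mul_hom, hq]
  obtain ⟨b, hb⟩ := hw (p.map (substVar l))
  have habs : w * q.map (substVar l) = w := by
    rw [← h1] at hb
    rw [← hb, mul_assoc, hidem]
  change q * (q.map (substVar l)).map ι = q
  change p * w.map ι = q at hpq
  conv_lhs => enter [1]; rw [← hpq]
  rw [mul_assoc, ← Ultrafilter.map_mul_hom, habs]
  exact hpq

/-- **Carlson–Simpson theorem** for left variable words over a finite alphabet. -/
theorem carlson_simpson [Finite L] [Nonempty L] (A : Set (FreeMonoid L)) :
    ∃ (w : FreeMonoid L) (y : ℕ → FreeMonoid (Option L)),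
      (∀ m, ∃ t, y m = FreeMonoid.of none * t) ∧
      ((∀ l m, substWord w y l m ∈ A) ∨ ∀ l m, substWord w y l m ∉ A) := by
  obtain ⟨q, hLV, hq⟩ := exists_ultrafilter_mul_map_substVar (L := L)
  obtain ⟨l₀⟩ := ‹Nonempty L›
  have hsub : ∀ (l : L) (x : FreeMonoid L), substVar l (FreeMonoid.map some x) = x := by
    intro l x
    simp [substVar, FreeMonoid.map_map]
  have hq' : ∀ (l : L) (s : FreeMonoid (Option L) → Prop), (∀ᶠ y in (q : Filter _), s y) →
      ∀ᶠ y in (q : Filter _), ∀ᶠ z in (q : Filter _),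
        s (y * FreeMonoid.map some (substVar l z)) := by
    intro l s hs
    have h : ∀ᶠ y in ((q * (q.map (substVar l)).map (FreeMonoid.map some) : Ultrafilter _) :
      Filter _), s y := by rwa [hq l]
    simpa only [Ultrafilter.eventually_mul, Ultrafilter.coe_map, Filter.eventually_map] using h
  have main : ∀ B : Set (FreeMonoid L), (∀ᶠ y in (q : Filter _), substVar l₀ y ∈ B) →
      ∃ (w : FreeMonoid L) (y : ℕ → FreeMonoid (Option L)),
        (∀ m, ∃ t, y m = FreeMonoid.of none * t) ∧ ∀ l m, substWord w y l m ∈ B := by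
    intro B hB
    let B' : Set (FreeMonoid L) :=
      {x ∈ B | ∀ l, ∀ᶠ y in (q : Filter _), x * substVar l y ∈ B}
    have hB' : ∀ᶠ y in (q : Filter _), substVar l₀ y ∈ B' := by
      refine hB.and (Filter.eventually_all.2 fun l => ?_)
      simpa only [map_mul, hsub] using hq' l _ hB
    have hstep : ∀ x ∈ B', ∀ l, ∀ᶠ y in (q : Filter _), x * substVar l y ∈ B' := by
      intro x hx l
      refine (hx.2 l).and (Filter.eventually_all.2 fun l' => ?_)
      simpa only [map_mul, hsub, mul_assoc] using hq' l' _ (hx.2 l)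
    obtain ⟨y₀, hy₀⟩ := hB'.exists
    have hchoice : ∀ s : {s : Set (FreeMonoid L) // s.Finite ∧ s ⊆ B'},
        ∃ y, (∃ t, y = FreeMonoid.of none * t) ∧
          ∀ x ∈ s.1, ∀ l, x * substVar l y ∈ B' := by
      intro s
      have : ∀ᶠ y in (q : Filter _), ∀ x ∈ s.1, ∀ l, x * substVar l y ∈ B' :=
        (Filter.eventually_all_finite s.2.1).2 fun x hx =>
          Filter.eventually_all.2 fun l => hstep x (s.2.2 hx) l
      exact (Filter.Eventually.and hLV this).exists
    choose c hcLV hc using hchoice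
    let next : {s : Set (FreeMonoid L) // s.Finite ∧ s ⊆ B'} →
        {s : Set (FreeMonoid L) // s.Finite ∧ s ⊆ B'} := fun s =>
      ⟨Set.image2 (fun x l => x * substVar l (c s)) s.1 Set.univ,
        s.2.1.image2 _ Set.finite_univ, by
          rintro _ ⟨x, hx, l, -, rfl⟩
          exact hc s x hx l⟩
    let s : ℕ → {s : Set (FreeMonoid L) // s.Finite ∧ s ⊆ B'} := fun n =>
      next^[n] ⟨{substVar l₀ y₀}, Set.finite_singleton _, by simpa using hy₀⟩
    refine ⟨substVar l₀ y₀, fun m => c (s m), fun m => hcLV _, fun l m => ?_⟩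
    have : substWord (substVar l₀ y₀) (fun m => c (s m)) l m ∈ (s m).1 := by
      induction m with
      | zero => exact Set.mem_singleton _
      | succ m ih =>
        have hs : s (m + 1) = next (s m) := Function.iterate_succ_apply' _ _ _
        rw [hs]
        exact ⟨_, ih, l m, trivial, rfl⟩
    exact ((s m).2.2 this).1
  rcases Ultrafilter.em q fun y => substVar l₀ y ∈ A with h | h
  · obtain ⟨w, y, hy, hw⟩ := main A h
    exact ⟨w, y, hy, Or.inl hw⟩
  · obtain ⟨w, y, hy, hw⟩ := main Aᶜ h
    exact ⟨w, y, hy, Or.inr hw⟩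

end CarlsonSimpson

/-! ### The monoid of partial `G`-partitions -/

section PartialPartitions

variable {G : Type} [Group G]

/-- Substitution of the values of `B` into a letter. -/
def letterAct (B : ℕ → Option (ℕ × G)) (o : Option (ℕ × G)) : Option (ℕ × G) :=
  o.bind fun p => (B p.1).map fun q => (q.1, p.2 * q.2)

theorem compG_apply (A B : ℕ → Option (ℕ × G)) (i : ℕ) : compG A B i = letterAct B (A i) := by
  unfold compG letterAct
  rcases A i with _ | ⟨j, b⟩
  · rfl
  · rcases h : B j with _ | ⟨k, c⟩ <;> simp [h]

@[simp] theorem letterAct_none (B : ℕ → Option (ℕ × G)) : letterAct B none = none := rfl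

@[simp] theorem letterAct_some_one (B : ℕ → Option (ℕ × G)) (j : ℕ) :
    letterAct B (some (j, 1)) = B j := by
  simp [letterAct]

theorem letterAct_eq_some {B : ℕ → Option (ℕ × G)} {o : Option (ℕ × G)} {k : ℕ} {g : G}
    (h : letterAct B o = some (k, g)) : ∃ j b c, o = some (j, b) ∧ B j = some (k, c) := by
  rcases o with _ | ⟨j, b⟩
  · simp at h
  · simp only [letterAct, Option.bind_some, Option.map_eq_some_iff] at h
    obtain ⟨⟨k', c⟩, hB, hk⟩ := h
    obtain ⟨rfl, -⟩ := Prod.mk.inj hk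
    exact ⟨j, b, c, rfl, hB⟩

theorem letterAct_congr {B B' : ℕ → Option (ℕ × G)} {o : Option (ℕ × G)}
    (h : ∀ j g, o = some (j, g) → B j = B' j) : letterAct B o = letterAct B' o := by
  rcases o with _ | ⟨j, b⟩
  · rfl
  · simp [letterAct, h j b rfl]

theorem letterAct_eq_self {B : ℕ → Option (ℕ × G)} {o : Option (ℕ × G)}
    (h : ∀ j g, o = some (j, g) → B j = some (j, 1)) : letterAct B o = o := by
  rcases o with _ | ⟨j, b⟩
  · rfl
  · simp [letterAct, h j b rfl]

theorem letterAct_letterAct (A B : ℕ → Option (ℕ × G)) (o : Option (ℕ × G)) :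
    letterAct B (letterAct A o) = letterAct (compG A B) o := by
  rcases o with _ | ⟨j, b⟩
  · rfl
  · simp only [letterAct, Option.bind_some, compG_apply]
    rcases A j with _ | ⟨k, c⟩
    · rfl
    · rcases h : B k with _ | ⟨l, d⟩ <;> simp [h, mul_assoc]

theorem mem_SG_iff {A : ℕ → Option (ℕ × G)} :
    A ∈ SG G ↔ ∃ m : ℕ → ℕ, StrictMono m ∧ (∀ j, A (m j) = some (j, 1)) ∧
      ∀ i j g, A i = some (j, g) → m j ≤ i := by
  constructor
  · rintro ⟨h1, h2⟩
    choose m hm hlt using h1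
    refine ⟨m, fun j j' hj => ?_, hm, fun i j g h => ?_⟩
    · obtain ⟨i, hi, hi'⟩ := h2 j j' hj
      exact (not_lt.1 fun h => hlt j i h 1 hi).trans_lt (hi' _ (hm j'))
    · exact not_lt.1 fun hi => hlt j i hi g h
  · rintro ⟨m, hmono, hm, hle⟩
    refine ⟨fun j => ⟨m j, hm j, fun i hi g h => ?_⟩, fun j j' hj => ⟨m j, hm j, fun i hi => ?_⟩⟩
    · exact absurd (hle i j g h) (not_le.2 hi)
    · exact (hmono hj).trans_le (hle _ _ _ hi)

theorem one_mem_SG : (fun i => some (i, 1)) ∈ SG G :=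
  mem_SG_iff.2 ⟨id, strictMono_id, fun _ => rfl, fun i j g h => by
    simp only [Option.some.injEq, Prod.mk.injEq] at h
    exact h.1.ge⟩

theorem compG_mem_SG {A B : ℕ → Option (ℕ × G)} (hA : A ∈ SG G) (hB : B ∈ SG G) :
    compG A B ∈ SG G := by
  obtain ⟨a, ha, ha1, hale⟩ := mem_SG_iff.1 hA
  obtain ⟨b, hb, hb1, hble⟩ := mem_SG_iff.1 hB
  refine mem_SG_iff.2 ⟨a ∘ b, ha.comp hb, fun j => ?_, fun i k g h => ?_⟩
  · simp [compG_apply, ha1, hb1]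
  · rw [compG_apply] at h
    obtain ⟨j, x, y, hx, hy⟩ := letterAct_eq_some h
    exact (ha.monotone (hble _ _ _ hy)).trans (hale _ _ _ hx)

instance : Monoid ↥(SG G) where
  mul A B := ⟨compG A.1 B.1, compG_mem_SG A.2 B.2⟩
  one := ⟨fun i => some (i, 1), one_mem_SG⟩
  mul_assoc A B C := Subtype.ext <| funext fun i => by
    change compG (compG A.1 B.1) C.1 i = compG A.1 (compG B.1 C.1) i
    rw [compG_apply, compG_apply, compG_apply, letterAct_letterAct]
  one_mul A := Subtype.ext <| funext fun i => by
    change compG (fun i => some (i, 1)) A.1 i = A.1 i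
    rw [compG_apply, letterAct_some_one]
  mul_one A := Subtype.ext <| funext fun i => by
    change compG A.1 (fun i => some (i, 1)) i = A.1 i
    rw [compG_apply]
    exact letterAct_eq_self fun _ _ _ => rfl

namespace SG

theorem mul_apply (A B : ↥(SG G)) (i : ℕ) : (A * B).1 i = letterAct B.1 (A.1 i) :=
  compG_apply _ _ _

theorem ext {A B : ↥(SG G)} (h : ∀ i, A.1 i = B.1 i) : A = B :=
  Subtype.ext (funext h)

/-- The first occurrence of the block `j`. -/
noncomputable def first (A : ↥(SG G)) : ℕ → ℕ :=
  (mem_SG_iff.1 A.2).choose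

theorem first_strictMono (A : ↥(SG G)) : StrictMono (first A) :=
  (mem_SG_iff.1 A.2).choose_spec.1

theorem apply_first (A : ↥(SG G)) (j : ℕ) : A.1 (first A j) = some (j, 1) :=
  (mem_SG_iff.1 A.2).choose_spec.2.1 j

theorem first_le {A : ↥(SG G)} {i j : ℕ} {g : G} (h : A.1 i = some (j, g)) : first A j ≤ i :=
  (mem_SG_iff.1 A.2).choose_spec.2.2 i j g h

theorem le_of_apply {A : ↥(SG G)} {i j : ℕ} {g : G} (h : A.1 i = some (j, g)) : j ≤ i :=
  ((first_strictMono A).le_apply).trans (first_le h)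

theorem first_mul (A B : ↥(SG G)) (j : ℕ) : first (A * B) j = first A (first B j) := by
  apply le_antisymm
  · apply first_le (g := 1)
    rw [mul_apply, apply_first, letterAct_some_one, apply_first]
  · have h := apply_first (A * B) j
    rw [mul_apply] at h
    obtain ⟨l, x, y, hx, hy⟩ := letterAct_eq_some h
    exact ((first_strictMono A).monotone (first_le hy)).trans (first_le hx)

theorem mul_apply_first (A B : ↥(SG G)) (j : ℕ) : (A * B).1 (first A j) = B.1 j := by
  rw [mul_apply, apply_first, letterAct_some_one]

variable (G) in
/-- The submonoid of partial `G`-partitions whose first `n` letters are `0, …, n - 1`. -/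
def fix (n : ℕ) : Submonoid ↥(SG G) where
  carrier := {C | ∀ i < n, C.1 i = some (i, 1)}
  one_mem' _ _ := rfl
  mul_mem' {A B} hA hB i hi := by
    rw [mul_apply, hA i hi, letterAct_some_one, hB i hi]

theorem fix_antitone : Antitone (fix G) := fun _ _ h _ hC i hi => hC i (hi.trans_le h)

theorem first_of_mem_fix {n : ℕ} {C : ↥(SG G)} (hC : C ∈ fix G n) {j : ℕ} (hj : j < n) :
    first C j = j :=
  le_antisymm (first_le (hC j hj)) (first_strictMono C).le_apply

/-! #### Infinite products -/

theorem exists_limit {P t : ℕ → ↥(SG G)} (ht : ∀ n, t n ∈ fix G n)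
    (hP : ∀ n, P (n + 1) = P n * t n) :
    ∃ D : ↥(SG G), ∀ N, ∀ i < N, D.1 i = (P N).1 i := by
  have hval : ∀ i N, i + 1 ≤ N → (P N).1 i = (P (i + 1)).1 i := by
    intro i N hN
    induction N, hN using Nat.le_induction with
    | base => rfl
    | succ N hN ih =>
      rw [← ih, hP, mul_apply]
      exact letterAct_eq_self fun j g h => ht N j ((le_of_apply h).trans_lt hN)
  have hfirst : ∀ j N, j + 1 ≤ N → first (P N) j = first (P (j + 1)) j := by
    intro j N hN
    induction N, hN using Nat.le_induction with
    | base => rfl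
    | succ N hN ih => rw [hP, first_mul, first_of_mem_fix (ht N) hN, ih]
  refine ⟨⟨fun i => (P (i + 1)).1 i, mem_SG_iff.2 ⟨fun j => first (P (j + 1)) j, ?_, ?_, ?_⟩⟩,
    fun N i hi => (hval i N hi).symm⟩
  · intro j j' hj
    have h := first_strictMono (P (j' + 1)) hj
    rwa [hfirst j (j' + 1) (by omega)] at h
  · intro j
    have h := apply_first (P (j + 1 + first (P (j + 1)) j)) j
    rw [hfirst j (j + 1 + first (P (j + 1)) j) (by omega)] at h
    dsimp only
    rwa [hval _ _ (by omega)] at h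
  · intro i j g h
    dsimp only at h ⊢
    rw [← hval i (i + j + 1) (by omega)] at h
    rw [← hfirst j (i + j + 1) (by omega)]
    exact first_le h

theorem exists_fusion (P : ℕ → ↥(SG G)) (hP : ∀ n, ∃ t ∈ fix G n, P (n + 1) = P n * t) :
    ∃ d, ∀ n, ∃ t ∈ fix G n, d = P n * t := by
  choose t ht hPt using hP
  obtain ⟨D, hD⟩ := exists_limit ht hPt
  refine ⟨D, fun n => ?_⟩
  let s : ℕ → ↥(SG G) := fun N => if n ≤ N then t N else 1
  have hs : ∀ N, s N ∈ fix G N := fun N => by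
    by_cases h : n ≤ N <;> simp only [s, h, if_true, if_false]
    exacts [ht N, one_mem _]
  let Q : ℕ → ↥(SG G) := fun N => Nat.rec 1 (fun N a => a * s N) N
  have hQ : ∀ N, Q (N + 1) = Q N * s N := fun _ => rfl
  obtain ⟨F, hF⟩ := exists_limit hs hQ
  have hQfix : ∀ N, Q N ∈ fix G n := by
    intro N
    induction N with
    | zero => exact one_mem _
    | succ N ih =>
      rw [hQ]
      refine mul_mem ih ?_
      by_cases h : n ≤ N <;> simp only [s, h, if_true, if_false]
      exacts [fix_antitone h (ht N), one_mem _]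
  have hQone : ∀ N, N ≤ n → Q N = 1 := by
    intro N
    induction N with
    | zero => exact fun _ => rfl
    | succ N ih =>
      intro h
      rw [hQ, ih (by omega), one_mul]
      exact if_neg (by omega)
  have hPQ : ∀ N, n ≤ N → P N = P n * Q N := by
    intro N hN
    induction N, hN using Nat.le_induction with
    | base => rw [hQone n le_rfl, mul_one]
    | succ N hN ih =>
      rw [hPt, ih, hQ, mul_assoc]
      simp only [s, hN, if_true]
  refine ⟨F, fun i hi => ?_, ext fun i => ?_⟩
  · rw [hF (i + 1) i (by omega), hQfix (i + 1) i hi]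
  · rw [hD (n + i + 1) i (by omega), hPQ _ (by omega), mul_apply, mul_apply]
    exact letterAct_congr fun j g h => (hF (n + i + 1) j (by have := le_of_apply h; omega)).symm

/-! #### Finite approximations -/

/-- `E` consists of a word of length `k` in the first `n` blocks, followed by the blocks
`n, n + 1, …`. -/
def IsHat (k n : ℕ) (E : ↥(SG G)) : Prop :=
  (∀ i < k, ∀ j g, E.1 i = some (j, g) → j < n) ∧ ∀ i, E.1 (k + i) = some (n + i, 1)

theorem IsHat.first_lt {k n : ℕ} {E : ↥(SG G)} (hE : IsHat k n E) {j : ℕ} (hj : j < n) :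
    first E j < k := by
  by_contra! h
  obtain ⟨i, hi⟩ := Nat.exists_eq_add_of_le h
  have h1 := apply_first E j
  rw [hi, hE.2 i] at h1
  simp only [Option.some.injEq, Prod.mk.injEq, and_true] at h1
  omega

theorem IsHat.le {k n : ℕ} {E : ↥(SG G)} (hE : IsHat k n E) : n ≤ k := by
  rcases n with _ | n
  · exact Nat.zero_le _
  · exact ((first_strictMono E).le_apply (x := n)).trans_lt (hE.first_lt n.lt_succ_self)

theorem IsHat.exists_eq_mul {k n : ℕ} {E X : ↥(SG G)} (hE : IsHat k n E)
    (hX : ∀ i < k, X.1 i = E.1 i) :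
    ∃ D ∈ fix G n, X = E * D ∧ ∀ i, D.1 (n + i) = X.1 (k + i) := by
  have hfirst : ∀ j, n ≤ j → k ≤ first X j := by
    intro j hj
    by_contra! h
    have h1 := apply_first X j
    rw [hX _ h] at h1
    exact absurd (hE.1 _ h _ _ h1) (by omega)
  have hmem : (fun j => if j < n then some (j, 1) else X.1 (k + (j - n))) ∈ SG G := by
    refine mem_SG_iff.2 ⟨fun j => if j < n then j else first X j - k + n, ?_, ?_, ?_⟩
    · intro j j' hj
      dsimp only
      have h1 := first_strictMono X hj
      split_ifs with h2 h3 h3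
      · exact hj
      · omega
      · omega
      · have := hfirst j (by omega)
        omega
    · intro j
      dsimp only
      by_cases h1 : j < n
      · simp only [h1, if_true]
      · have := hfirst j (by omega)
        simp only [h1, if_false]
        rw [if_neg (by omega), show k + (first X j - k + n - n) = first X j by omega, apply_first]
    · intro i j g h
      dsimp only at h ⊢
      by_cases h1 : i < n
      · rw [if_pos h1] at h
        simp only [Option.some.injEq, Prod.mk.injEq] at h
        rw [if_pos (by omega)]
        omega
      · rw [if_neg h1] at h
        have := first_le h
        split_ifs with h2 <;> omega
  refine ⟨⟨_, hmem⟩, fun i hi => if_pos hi, ext fun i => ?_, fun i => ?_⟩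
  · rw [mul_apply]
    by_cases hi : i < k
    · rw [hX i hi]
      exact (letterAct_eq_self fun j g h => if_pos (hE.1 i hi j g h)).symm
    · obtain ⟨i, rfl⟩ := Nat.exists_eq_add_of_le (not_lt.1 hi)
      rw [hE.2, letterAct_some_one]
      simp
  · simp

theorem IsHat.exists_mul_eq_mul {k n : ℕ} {E D : ↥(SG G)} (hE : IsHat k n E)
    (hD : D ∈ fix G n) : ∃ D' ∈ fix G k, D' * E = E * D := by
  let lift : ℕ × G → ℕ × G := fun p =>
    (if p.1 < n then first E p.1 else k + (p.1 - n), p.2)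
  have hfirst : ∀ j, n ≤ j → n ≤ first D j := fun j hj =>
    hj.trans (first_strictMono D).le_apply
  have hnk := hE.le
  have hmem : (fun i => if i < k then some (i, 1) else (D.1 (n + (i - k))).map lift) ∈ SG G := by
    refine mem_SG_iff.2 ⟨fun j => if j < k then j else k + (first D (j - k + n) - n), ?_, ?_, ?_⟩
    · intro j j' hj
      dsimp only
      split_ifs with h1 h2 h2
      · exact hj
      · omega
      · omega
      · have h3 := first_strictMono D (show j - k + n < j' - k + n by omega)
        have := hfirst (j - k + n) (by omega)
        omega
    · intro j
      dsimp only
      by_cases h1 : j < k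
      · simp only [h1, if_true]
      · have := hfirst (j - k + n) (by omega)
        simp only [h1, if_false]
        rw [if_neg (by omega), show n + (k + (first D (j - k + n) - n) - k) = first D (j - k + n) by omega,
          apply_first]
        simp only [lift, Option.map_some, Option.some.injEq, Prod.mk.injEq, and_true]
        rw [if_neg (by omega)]
        omega
    · intro i j g h
      dsimp only at h ⊢
      by_cases h1 : i < k
      · rw [if_pos h1] at h
        simp only [Option.some.injEq, Prod.mk.injEq] at h
        rw [if_pos (by omega)]
        omega
      · by_cases h2 : j < k
        · rw [if_pos h2]
          omega
        rw [if_neg h2]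
        simp only [h1, if_false, Option.map_eq_some_iff, Prod.exists] at h
        obtain ⟨l, x, hl, hlj⟩ := h
        simp only [lift, Prod.mk.injEq] at hlj
        have h3 := first_le hl
        by_cases hln : l < n
        · rw [if_pos hln] at hlj
          have := hE.first_lt hln
          omega
        · rw [if_neg hln] at hlj
          rw [show j - k + n = l by omega]
          omega
  refine ⟨⟨_, hmem⟩, fun i hi => if_pos hi, ext fun i => ?_⟩
  rw [mul_apply, mul_apply]
  by_cases hi : i < k
  · simp only [hi, if_true, letterAct_some_one]
    exact (letterAct_eq_self fun j g h => hD j (hE.1 i hi j g h)).symm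
  · obtain ⟨i, rfl⟩ := Nat.exists_eq_add_of_le (not_lt.1 hi)
    rw [hE.2, letterAct_some_one]
    simp only [hi, if_false, Nat.add_sub_cancel_left]
    rcases D.1 (n + i) with _ | ⟨j, g⟩
    · rfl
    · by_cases hj : j < n
      · simp [lift, hj, letterAct, apply_first]
      · simp [lift, hj, letterAct, hE.2, Nat.add_sub_cancel' (not_lt.1 hj)]

theorem IsHat.exists_mul_eq_mul_right {k n : ℕ} {E D : ↥(SG G)} (hE : IsHat k n E)
    (hD : D ∈ fix G k) : ∃ D' ∈ fix G n, D * E = E * D' := by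
  obtain ⟨D', hD', h, -⟩ := hE.exists_eq_mul (X := D * E) fun i hi => by
    rw [mul_apply, hD i hi, letterAct_some_one]
  exact ⟨D', hD', h⟩

theorem exists_isHat (C : ↥(SG G)) (n : ℕ) :
    ∃ k ≥ n, ∃ E, IsHat k n E ∧ ∃ D ∈ fix G n, C = E * D := by
  have hblock : ∀ i < first C n, ∀ j g, C.1 i = some (j, g) → j < n := fun i hi j g h =>
    (first_strictMono C).lt_iff_lt.1 ((first_le h).trans_lt hi)
  have hmem : (fun i => if i < first C n then C.1 i else some (n + (i - first C n), 1)) ∈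
      SG G := by
    refine mem_SG_iff.2
      ⟨fun j => if j < n then first C j else first C n + (j - n), ?_, ?_, ?_⟩
    · intro j j' hj
      dsimp only
      have h0 := first_strictMono C hj
      split_ifs with h1 h2 h2
      · exact h0
      · have := first_strictMono C h1
        omega
      · omega
      · omega
    · intro j
      dsimp only
      by_cases h1 : j < n
      · simp only [h1, if_true, first_strictMono C h1, apply_first]
      · simp only [h1, if_false]
        rw [if_neg (by omega)]
        simp only [Option.some.injEq, Prod.mk.injEq, and_true]
        omega
    · intro i j g h
      dsimp only at h ⊢
      by_cases h1 : i < first C n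
      · rw [if_pos h1] at h
        rw [if_pos (hblock i h1 j g h)]
        exact first_le h
      · rw [if_neg h1] at h
        simp only [Option.some.injEq, Prod.mk.injEq] at h
        rw [if_neg (by omega)]
        omega
  have hE : IsHat (first C n) n ⟨_, hmem⟩ := by
    refine ⟨fun i hi j g h => ?_, fun i => ?_⟩
    · simp only [hi, if_true] at h
      exact hblock i hi j g h
    · simp
  obtain ⟨D, hD, h, -⟩ := hE.exists_eq_mul (X := C) fun i hi => (if_pos hi).symm
  exact ⟨_, (first_strictMono C).le_apply, _, hE, D, hD, h⟩

theorem finite_isHat [Finite G] (k : ℕ) :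
    {p : ↥(SG G) × ℕ | IsHat k p.2 p.1}.Finite := by
  let f : ↥(SG G) × ℕ → ℕ × (Fin k → Option (ℕ × G)) := fun p => (p.2, fun i => p.1.1 i)
  have hfin : (Set.Iic k ×ˢ Set.univ.pi fun _ : Fin k =>
      insert none (some '' (Set.Iio k ×ˢ (Set.univ : Set G)))).Finite :=
    (Set.finite_Iic k).prod <| Set.Finite.pi fun _ =>
      (((Set.finite_Iio k).prod Set.finite_univ).image _).insert _
  refine Set.Finite.of_finite_image (f := f) (hfin.subset ?_) ?_
  · rintro _ ⟨⟨E, n⟩, hE, rfl⟩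
    have hE : IsHat k n E := hE
    refine ⟨hE.le, fun i _ => ?_⟩
    rcases h : E.1 i with _ | ⟨j, g⟩
    · exact Or.inl h
    · exact Or.inr ⟨(j, g), ⟨(le_of_apply h).trans_lt i.2, trivial⟩, h.symm⟩
  · rintro ⟨E, n⟩ hE ⟨E', n'⟩ hE' h
    have hE : IsHat k n E := hE
    have hE' : IsHat k n' E' := hE'
    obtain ⟨rfl, h⟩ := Prod.mk.inj h
    refine Prod.ext (ext fun i => ?_) rfl
    by_cases hi : i < k
    · exact congrFun h ⟨i, hi⟩
    · obtain ⟨i, rfl⟩ := Nat.exists_eq_add_of_le (not_lt.1 hi)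
      rw [hE.2, hE'.2]

/-! #### The pigeonhole principle -/

/-- The letters of the first `n` blocks. -/
def oldLetter {H : Type*} (n : ℕ) : Option (Fin n × H) → Option (ℕ × H) :=
  Option.map (Prod.map Fin.val id)

theorem oldLetter_lt {H : Type*} {n : ℕ} {o : Option (Fin n × H)} {j : ℕ} {g : H}
    (h : oldLetter n o = some (j, g)) : j < n := by
  simp only [oldLetter, Option.map_eq_some_iff] at h
  obtain ⟨a, -, ha⟩ := h
  exact (Prod.mk.inj ha).1 ▸ a.1.2

theorem exists_oldLetter {H : Type*} {n : ℕ} {o : Option (ℕ × H)}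
    (h : ∀ j g, o = some (j, g) → j < n) :
    ∃ l, oldLetter n l = o := by
  rcases o with _ | ⟨j, g⟩
  · exact ⟨none, rfl⟩
  · exact ⟨some (⟨j, h j g rfl⟩, g), rfl⟩

theorem letterAct_oldLetter {n : ℕ} {C : ↥(SG G)} (hC : C ∈ fix G n) (o : Option (Fin n × G)) :
    letterAct C.1 (oldLetter n o) = oldLetter n o :=
  letterAct_eq_self fun j _ h => hC j (oldLetter_lt h)

theorem exists_isHat_word (n : ℕ) (u : List (Option (Fin n × G))) :
    ∃ E ∈ fix G n, IsHat (n + u.length) n E ∧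
      ∀ i l, u[i]? = some l → E.1 (n + i) = oldLetter n l := by
  let f : ℕ → Option (ℕ × G) := fun i =>
    if i < n then some (i, 1) else (u[i - n]?).elim (some (i - u.length, 1)) (oldLetter n)
  have hf₁ : ∀ i < n, f i = some (i, 1) := fun i hi => if_pos hi
  have hf₂ : ∀ i l, u[i]? = some l → f (n + i) = oldLetter n l := fun i l h => by
    simp [f, h]
  have hf₃ : ∀ i, f (n + u.length + i) = some (n + i, 1) := fun i => by
    have h : u[n + u.length + i - n]? = none := List.getElem?_eq_none (by omega)
    simp only [f, h, Option.elim_none]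
    rw [if_neg (by omega), show n + u.length + i - u.length = n + i by omega]
  have hlt : ∀ i < n + u.length, ∀ j g, f i = some (j, g) → j < n := by
    intro i hi j g h
    by_cases hin : i < n
    · rw [hf₁ i hin] at h
      simp only [Option.some.injEq, Prod.mk.injEq] at h
      omega
    · obtain ⟨i, rfl⟩ := Nat.exists_eq_add_of_le (not_lt.1 hin)
      rw [hf₂ i _ (List.getElem?_eq_getElem (by omega))] at h
      exact oldLetter_lt h
  refine ⟨⟨f, mem_SG_iff.2 ⟨fun j => if j < n then j else u.length + j, ?_, ?_, ?_⟩⟩, hf₁,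
    ⟨hlt, hf₃⟩, hf₂⟩
  · intro j j' hj
    dsimp only
    split_ifs <;> omega
  · intro j
    dsimp only
    by_cases hj : j < n
    · rw [if_pos hj, hf₁ j hj]
    · rw [if_neg hj, show u.length + j = n + u.length + (j - n) by omega, hf₃,
        show n + (j - n) = j by omega]
  · intro i j g h
    dsimp only
    by_cases hi : i < n + u.length
    · rw [if_pos (hlt i hi j g h)]
      by_cases hin : i < n
      · rw [hf₁ i hin] at h
        simp only [Option.some.injEq, Prod.mk.injEq] at h
        omega
      · have := hlt i hi j g h
        omega
    · obtain ⟨i, rfl⟩ := Nat.exists_eq_add_of_le (not_lt.1 hi)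
      rw [hf₃] at h
      simp only [Option.some.injEq, Prod.mk.injEq] at h
      rw [if_neg (by omega)]
      omega

/-- The finite pieces of the partial `G`-partition determined by a word `w` and a sequence `y` of
variable words, the variable of `y m` being replaced by the block `n + m`. -/
def pieces (n : ℕ) (w : FreeMonoid (Option (Fin n × G)))
    (y : ℕ → FreeMonoid (Option (Option (Fin n × G)))) : ℕ → List (Option (ℕ × G))
  | 0 => w.toList.map (oldLetter n)
  | m + 1 => pieces n w y m ++ (y m).toList.map fun o => o.elim (some (n + m, 1)) (oldLetter n)

variable {n : ℕ} {w : FreeMonoid (Option (Fin n × G))}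
  {y : ℕ → FreeMonoid (Option (Option (Fin n × G)))}

theorem pieces_prefix {m m' : ℕ} (h : m ≤ m') : pieces n w y m <+: pieces n w y m' := by
  induction m', h using Nat.le_induction with
  | base => exact List.prefix_rfl
  | succ m' _ ih => exact ih.trans (List.prefix_append _ _)

theorem getElem?_pieces {m m' i : ℕ} (h : i < (pieces n w y m).length)
    (h' : i < (pieces n w y m').length) : (pieces n w y m)[i]? = (pieces n w y m')[i]? := by
  rcases le_total m m' with hm | hm
  · obtain ⟨t, ht⟩ := pieces_prefix (n := n) (w := w) (y := y) hm
    rw [← ht, List.getElem?_append_left h]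
  · obtain ⟨t, ht⟩ := pieces_prefix (n := n) (w := w) (y := y) hm
    rw [← ht, List.getElem?_append_left h']

theorem le_of_getElem?_pieces {m i j : ℕ} {g : G}
    (h : (pieces n w y m)[i]? = some (some (j, g))) (hj : n ≤ j) :
    (pieces n w y (j - n)).length ≤ i := by
  induction m with
  | zero =>
    simp only [pieces, List.getElem?_map, Option.map_eq_some_iff] at h
    obtain ⟨l, -, hl⟩ := h
    have := oldLetter_lt hl
    omega
  | succ m ih =>
    by_cases hi : i < (pieces n w y m).length
    · rw [pieces, List.getElem?_append_left hi] at h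
      exact ih h
    · rw [pieces, List.getElem?_append_right (not_lt.1 hi)] at h
      simp only [List.getElem?_map, Option.map_eq_some_iff] at h
      obtain ⟨o, -, ho⟩ := h
      rcases o with _ | l
      · simp only [Option.elim_none, Option.some.injEq, Prod.mk.injEq] at ho
        rw [show j - n = m by omega]
        exact not_lt.1 hi
      · have := oldLetter_lt ho
        omega

theorem getElem?_length_pieces (hy : ∀ m, ∃ t, y m = FreeMonoid.of none * t) (m : ℕ) :
    (pieces n w y (m + 1))[(pieces n w y m).length]? = some (some (n + m, 1)) := by
  obtain ⟨t, ht⟩ := hy m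
  rw [pieces, List.getElem?_append_right le_rfl, ht]
  simp

theorem length_pieces_lt (hy : ∀ m, ∃ t, y m = FreeMonoid.of none * t) (m : ℕ) :
    (pieces n w y m).length < (pieces n w y (m + 1)).length :=
  (List.getElem?_eq_some_iff.1 (getElem?_length_pieces hy m)).1

theorem exists_pieces (hy : ∀ m, ∃ t, y m = FreeMonoid.of none * t) :
    ∃ D ∈ fix G n, (∀ m i a, (pieces n w y m)[i]? = some a → D.1 (n + i) = a) ∧
      ∀ m, D.1 (n + (pieces n w y m).length) = some (n + m, 1) := by
  have hmono : StrictMono fun m => (pieces n w y m).length :=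
    strictMono_nat_of_lt_succ (length_pieces_lt hy)
  have hlen : ∀ i, i < (pieces n w y (i + 1)).length := fun i => hmono.le_apply (x := i + 1)
  let f : ℕ → Option (ℕ × G) := fun i =>
    if i < n then some (i, 1) else (pieces n w y (i - n + 1))[i - n]'(hlen _)
  have hf₁ : ∀ i < n, f i = some (i, 1) := fun i hi => if_pos hi
  have hf₂ : ∀ m i a, (pieces n w y m)[i]? = some a → f (n + i) = a := by
    intro m i a h
    obtain ⟨hi, -⟩ := List.getElem?_eq_some_iff.1 h
    rw [getElem?_pieces hi (hlen i), List.getElem?_eq_getElem (hlen i), Option.some.injEq] at h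
    simp [f, h]
  have hf₃ : ∀ m, f (n + (pieces n w y m).length) = some (n + m, 1) := fun m =>
    hf₂ _ _ _ (getElem?_length_pieces hy m)
  refine ⟨⟨f, mem_SG_iff.2
    ⟨fun j => if j < n then j else n + (pieces n w y (j - n)).length, ?_, ?_, ?_⟩⟩, hf₁, hf₂, hf₃⟩
  · intro j j' hj
    dsimp only
    split_ifs with h1 h2 h2
    · exact hj
    · omega
    · omega
    · exact Nat.add_lt_add_left (hmono (by omega)) n
  · intro j
    dsimp only
    by_cases hj : j < n
    · rw [if_pos hj, hf₁ j hj]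
    · rw [if_neg hj, hf₃, Nat.add_sub_cancel' (not_lt.1 hj)]
  · intro i j g h
    dsimp only
    by_cases hi : i < n
    · rw [hf₁ i hi] at h
      simp only [Option.some.injEq, Prod.mk.injEq] at h
      rw [if_pos (by omega)]
      omega
    · obtain ⟨i, rfl⟩ := Nat.exists_eq_add_of_le (not_lt.1 hi)
      split_ifs with hj
      · omega
      · have h1 : (pieces n w y (i + 1))[i]? = some (some (j, g)) := by
          rw [← h, List.getElem?_eq_getElem (hlen i), hf₂ _ _ _ (List.getElem?_eq_getElem (hlen i))]
        have := le_of_getElem?_pieces h1 (not_lt.1 hj)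
        omega

theorem map_letterAct_pieces {C : ↥(SG G)} (hC : C ∈ fix G n) {l : ℕ → Option (Fin n × G)}
    {m : ℕ} (hl : ∀ i < m, C.1 (n + i) = oldLetter n (l i)) :
    (pieces n w y m).map (letterAct C.1) = (substWord w y l m).toList.map (oldLetter n) := by
  induction m with
  | zero => simp [pieces, substWord, letterAct_oldLetter hC]
  | succ m ih =>
    rw [pieces, List.map_append, ih fun i hi => hl i (by omega), substWord, FreeMonoid.toList_mul,
      List.map_append, substVar, FreeMonoid.toList_map, List.map_map, List.map_map]
    congr 2
    funext o
    rcases o with _ | o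
    · simp [hl m (by omega)]
    · simp [letterAct_oldLetter hC]

theorem pigeonhole [Finite G] (n : ℕ) (V : Set ↥(SG G))
    (hV : ∀ c ∈ fix G n, ∀ x ∈ fix G (n + 1), (c * x ∈ V ↔ c ∈ V)) :
    ∃ d ∈ fix G n, (∀ c ∈ fix G n, d * c ∈ V) ∨ ∀ c ∈ fix G n, d * c ∉ V := by
  choose hat hfix hhat hword using exists_isHat_word (G := G) n
  obtain ⟨w, y, hy, hA⟩ := carlson_simpson {u : FreeMonoid (Option (Fin n × G)) | hat u.toList ∈ V}
  obtain ⟨D, hD, hDval, hDfirst⟩ := exists_pieces (w := w) hy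
  have key : ∀ C ∈ fix G n, ∃ l m, D * C ∈ V ↔ hat (substWord w y l m).toList ∈ V := by
    intro C hC
    obtain ⟨m, hm⟩ := Nat.exists_eq_add_of_le ((first_strictMono C).le_apply (x := n))
    have hl : ∀ i, ∃ l, i < m → C.1 (n + i) = oldLetter n l := by
      intro i
      by_cases hi : i < m
      · obtain ⟨l, hl⟩ := exists_oldLetter (n := n) (o := C.1 (n + i)) fun j g h =>
          (first_strictMono C).lt_iff_lt.1 ((first_le h).trans_lt (by omega))
        exact ⟨l, fun _ => hl.symm⟩
      · exact ⟨none, fun h => absurd h hi⟩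
    choose l hl using hl
    refine ⟨l, m, ?_⟩
    have hmap := map_letterAct_pieces (w := w) (y := y) hC hl
    set u := (substWord w y l m).toList
    have hlen : (pieces n w y m).length = u.length := by
      simpa using congrArg List.length hmap
    obtain ⟨D', hD', hX, hval⟩ := (hhat u).exists_eq_mul (X := D * C) (by
      intro i hi
      by_cases hin : i < n
      · rw [mul_mem hD hC i hin, hfix u i hin]
      · obtain ⟨i, rfl⟩ := Nat.exists_eq_add_of_le (not_lt.1 hin)
        have hi1 : i < u.length := by omega
        have hi2 : i < (pieces n w y m).length := by omega
        rw [hword u i _ (List.getElem?_eq_getElem hi1), mul_apply,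
          hDval m i _ (List.getElem?_eq_getElem hi2)]
        have := congrArg (fun s => s[i]?) hmap
        simpa [List.getElem?_eq_getElem hi1, List.getElem?_eq_getElem hi2] using this)
    have hD'n : D'.1 n = some (n, 1) := by
      have := hval 0
      rwa [Nat.add_zero, Nat.add_zero, ← hlen, mul_apply, hDfirst, letterAct_some_one, ← hm,
        apply_first] at this
    rw [hX]
    refine hV _ (hfix u) _ fun i hi => ?_
    rcases Nat.lt_succ_iff_lt_or_eq.1 hi with h | rfl
    exacts [hD' i h, hD'n]
  refine ⟨D, hD, hA.imp (fun h C hC => ?_) fun h C hC => ?_⟩ <;>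
    obtain ⟨l, m, hlm⟩ := key C hC
  · exact hlm.2 (h l m)
  · exact fun hmem => h l m (hlm.1 hmem)

theorem ramseyFiltration_fix [Finite G] : RamseyFiltration (fix G) where
  antitone := fix_antitone
  fusion := exists_fusion
  approx := ⟨fun k => {p | IsHat k p.2 p.1}, finite_isHat,
    fun _ _ hp _ hd => IsHat.exists_mul_eq_mul hp hd,
    fun _ _ hp _ hd => IsHat.exists_mul_eq_mul_right hp hd, fun c n => by
      obtain ⟨k, hk, E, hE, hD⟩ := exists_isHat c n
      exact ⟨k, hk, (E, n), hE, rfl, hD⟩⟩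
  pigeonhole := pigeonhole

/-! #### The Ellentuck topology -/

/-- The quasi-order on `S_G(ω;ω)`. -/
def Refines (A B : ↥(SG G)) : Prop := ∃ C ∈ SG G, A.val = compG B.val C

theorem refines_iff {A B : ↥(SG G)} : Refines A B ↔ ∃ C, A = B * C :=
  ⟨fun ⟨C, hC, h⟩ => ⟨⟨C, hC⟩, Subtype.ext h⟩, fun ⟨C, h⟩ => ⟨C.1, C.2, congrArg Subtype.val h⟩⟩

/-- The approximation map on `S_G(ω;ω)`. -/
noncomputable def approx (n : ℕ) (A : ↥(SG G)) : List (Option (ℕ × G)) := rG n A.val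

theorem approx_zero (A : ↥(SG G)) : approx 0 A = [] := rfl

theorem approx_eq_ofFn {n : ℕ} (hn : n ≠ 0) (A : ↥(SG G)) :
    approx n A = List.ofFn fun i : Fin (first A n) => A.1 i := by
  have h : sInf {i | A.1 i = some (n, (1 : G))} = first A n :=
    le_antisymm (Nat.sInf_le (apply_first A n))
      (le_csInf ⟨_, apply_first A n⟩ fun _ h => first_le h)
  rw [approx, rG, if_neg hn, h]

theorem length_approx {n : ℕ} (hn : n ≠ 0) (A : ↥(SG G)) : (approx n A).length = first A n := by
  rw [approx_eq_ofFn hn, List.length_ofFn]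

theorem getElem?_approx {n : ℕ} (hn : n ≠ 0) (A : ↥(SG G)) {i : ℕ} (hi : i < first A n) :
    (approx n A)[i]? = some (A.1 i) := by
  rw [approx_eq_ofFn hn, List.getElem?_eq_getElem (by simpa using hi), List.getElem_ofFn]

theorem eq_of_approx_eq {l n : ℕ} (hn : n ≠ 0) {X B : ↥(SG G)} (h : approx l X = approx n B) :
    first X n = first B n ∧ ∀ i < first B n, X.1 i = B.1 i := by
  have hlen := congrArg List.length h
  have hl : l ≠ 0 := by
    rintro rfl
    rw [length_approx hn, approx_zero, List.length_nil] at hlen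
    have := (first_strictMono B).le_apply (x := n)
    omega
  rw [length_approx hl, length_approx hn] at hlen
  have hval : ∀ i < first B n, X.1 i = B.1 i := fun i hi => by
    have := getElem?_approx hl X (hlen ▸ hi)
    rwa [h, getElem?_approx hn B hi, Option.some.injEq, eq_comm] at this
  rcases lt_trichotomy l n with hln | rfl | hln
  · have h1 := first_strictMono B hln
    have h2 := first_le ((hval _ h1).trans (apply_first B l))
    omega
  · exact ⟨hlen, hval⟩
  · have h1 := first_strictMono X hln
    have h2 := first_le ((hval _ (hlen ▸ h1)).symm.trans (apply_first X n))
    omega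

theorem approx_mul {n : ℕ} (hn : n ≠ 0) (B : ↥(SG G)) {C : ↥(SG G)} (hC : C ∈ fix G (n + 1)) :
    approx n (B * C) = approx n B := by
  have hfirst : first (B * C) n = first B n := by
    rw [first_mul, first_of_mem_fix hC n.lt_succ_self]
  refine List.ext_getElem (by rw [length_approx hn, length_approx hn, hfirst]) fun i h1 h2 => ?_
  rw [length_approx hn] at h1 h2
  rw [← Option.some.injEq, ← List.getElem?_eq_getElem, ← List.getElem?_eq_getElem,
    getElem?_approx hn _ h1, getElem?_approx hn _ h2, mul_apply]
  refine congrArg some (letterAct_eq_self fun j g h => hC j ?_)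
  have := (first_strictMono B).lt_iff_lt.1 ((first_le h).trans_lt h2)
  omega

theorem mem_fix_of_approx_mul {l n : ℕ} (hn : n ≠ 0) {B C : ↥(SG G)}
    (h : approx l (B * C) = approx n B) : C ∈ fix G (n + 1) := by
  obtain ⟨hfirst, hval⟩ := eq_of_approx_eq hn h
  intro j hj
  rw [← mul_apply_first B C]
  rcases Nat.lt_succ_iff_lt_or_eq.1 hj with hj | rfl
  · rw [hval _ (first_strictMono B hj), apply_first]
  · rw [← hfirst, apply_first]

/-- The index of the submonoid of `S_G(ω;ω)` preserving the `n`-th approximation. -/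
def level (n : ℕ) : ℕ := if n = 0 then 0 else n + 1

theorem le_level (n : ℕ) : n ≤ level n := by
  unfold level
  split_ifs <;> omega

theorem approx_mul_of_mem_fix_level {n : ℕ} (B : ↥(SG G)) {C : ↥(SG G)}
    (hC : C ∈ fix G (level n)) : approx n (B * C) = approx n B := by
  by_cases hn : n = 0
  · subst hn
    rfl
  · exact approx_mul hn B (by simpa [level, hn] using hC)

theorem ellSet_approx (n : ℕ) (B : ↥(SG G)) :
    EllSet Refines approx (approx n B) B = {X | ∃ C ∈ fix G (level n), X = B * C} := by
  ext X
  constructor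
  · rintro ⟨hle, l, hl⟩
    obtain ⟨C, rfl⟩ := refines_iff.1 hle
    refine ⟨C, ?_, rfl⟩
    by_cases hn : n = 0
    · subst hn
      exact fun i hi => absurd hi (Nat.not_lt_zero i)
    · simpa [level, hn] using mem_fix_of_approx_mul hn hl
  · rintro ⟨C, hC, rfl⟩
    exact ⟨refines_iff.2 ⟨C, rfl⟩, n, approx_mul_of_mem_fix_level B hC⟩

theorem exists_ellSet_subset {a : List (Option (ℕ × G))} {A B : ↥(SG G)}
    (hB : B ∈ EllSet Refines approx a A) :
    ∃ n, approx n B = a ∧ EllSet Refines approx a B ⊆ EllSet Refines approx a A := by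
  obtain ⟨hle, n, hn⟩ := hB
  refine ⟨n, hn, fun X hX => ⟨?_, hX.2⟩⟩
  obtain ⟨C, rfl⟩ := refines_iff.1 hle
  obtain ⟨D, rfl⟩ := refines_iff.1 hX.1
  exact refines_iff.2 ⟨C * D, mul_assoc _ _ _⟩

theorem isOpen_ellTop_iff (U : Set ↥(SG G)) :
    IsOpen[EllTop Refines approx] U ↔ ∀ a ∈ U, ∃ n, Accepts (fix G) U a n := by
  constructor
  · intro hU
    induction hU with
    | basic s hs =>
      obtain ⟨a, A, rfl⟩ := hs
      intro B hB
      obtain ⟨n, rfl, hsub⟩ := exists_ellSet_subset hB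
      exact ⟨level n, fun C hC => hsub ((ellSet_approx n B).ge ⟨C, hC, rfl⟩)⟩
    | univ => exact fun _ _ => ⟨0, fun _ _ => trivial⟩
    | inter s t _ _ hs ht =>
      rintro a ⟨has, hat⟩
      obtain ⟨n, hn⟩ := hs a has
      obtain ⟨m, hm⟩ := ht a hat
      exact ⟨max n m, fun c hc => ⟨hn c (fix_antitone (le_max_left _ _) hc),
        hm c (fix_antitone (le_max_right _ _) hc)⟩⟩
    | sUnion S _ hS =>
      rintro a ⟨s, hs, has⟩
      obtain ⟨n, hn⟩ := hS s hs a has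
      exact ⟨n, fun c hc => ⟨s, hs, hn c hc⟩⟩
  · intro hU
    let := EllTop (Refines (G := G)) approx
    refine isOpen_iff_forall_mem_open.2 fun B hB => ?_
    obtain ⟨n, hn⟩ := hU B hB
    refine ⟨EllSet Refines approx (approx n B) B, ?_,
      TopologicalSpace.isOpen_generateFrom_of_mem ⟨_, _, rfl⟩, ?_⟩ <;> rw [ellSet_approx]
    · rintro _ ⟨C, hC, rfl⟩
      exact hn C (fix_antitone (le_level n) hC)
    · exact ⟨1, one_mem _, (mul_one B).symm⟩

theorem exists_ellSet {a : List (Option (ℕ × G))} {A : ↥(SG G)}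
    (hne : (EllSet Refines approx a A).Nonempty) {Φ : Set ↥(SG G) → Prop}
    (hΦ : ∀ B n, ∃ d ∈ fix G n, Φ {X | ∃ c ∈ fix G n, X = B * d * c}) :
    ∃ B ∈ EllSet Refines approx a A, Φ (EllSet Refines approx a B) := by
  obtain ⟨B, hB⟩ := hne
  obtain ⟨n, rfl, hsub⟩ := exists_ellSet_subset hB
  obtain ⟨d, hd, h⟩ := hΦ B (level n)
  have hmem := (ellSet_approx n B).ge ⟨d, hd, rfl⟩
  refine ⟨B * d, hsub hmem, ?_⟩
  rwa [← approx_mul_of_mem_fix_level B hd, ellSet_approx]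

theorem isTopRamseySpace [Finite G] : IsTopRamseySpace (Refines (G := G)) approx := by
  let := EllTop (Refines (G := G)) approx
  refine ⟨?_, fun S hS a A hne =>
    exists_ellSet hne (Φ := fun s => s ∩ S = ∅) fun B n => ?_⟩
  · rintro _ ⟨U, N, hU, hN, rfl⟩ a A hne
    refine exists_ellSet hne (Φ := fun s => s ⊆ symmDiff U N ∨ s ∩ symmDiff U N = ∅) fun B n => ?_
    obtain ⟨d, hd, h⟩ := ramseyFiltration_fix.exists_forall_mem_or_notMem_of_baire
      isOpen_ellTop_iff hU hN B n
    refine ⟨d, hd, h.imp ?_ fun h => Set.disjoint_iff_inter_eq_empty.1 <|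
      Set.disjoint_left.2 ?_⟩
    · rintro h _ ⟨c, hc, rfl⟩
      exact h c hc
    · rintro _ ⟨c, hc, rfl⟩
      exact h c hc
  · obtain ⟨d, hd, h⟩ := ramseyFiltration_fix.exists_forall_notMem_of_isMeagre
      isOpen_ellTop_iff hS B n
    refine ⟨d, hd, Set.disjoint_iff_inter_eq_empty.1 <| Set.disjoint_left.2 ?_⟩
    rintro _ ⟨c, hc, rfl⟩
    exact h c hc

end SG

end PartialPartitions

/-- **Theorem (Prömel–Voigt).** For every finite group `G`,
`(S_G(ω;ω), ≤, r)` is a topological Ramsey space, where `A ≤ B` iff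
`A = B·C` for some `C ∈ S_G(ω;ω)`. -/
theorem sg_is_topological_ramsey_space (G : Type) [Group G] [Fintype G] :
    IsTopRamseySpace
      (fun A B : ↥(SG G) => ∃ C ∈ SG G, A.val = compG B.val C)
      (fun n (A : ↥(SG G)) => rG n A.val) := by
  exact SG.isTopRamseySpace
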